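/- For every non-negative integer n and every real number x, one has x^n = Σ_{k=0}^{n} S_B(n,k) · ∏_{j=1}^{k} (x − (2j−1)), where the empty product (k = 0) equals 1. -/

import Mathlib

open Classical Finset

/-! ### Signed permutations (type B), window notation -/

/-- `w` is the window notation of a signed permutation of `{1,…,n}`. -/
def IsSignedPerm {n : ℕ} (w : Fin n → ℤ) : Prop :=
  (∀ i, 1 ≤ |w i| ∧ |w i| ≤ (n : ℤ)) ∧ Function.Injective fun i => |w i|

/-- The value `β(i)` for `1 ≤ i ≤ n`, and `0` otherwise (so `β(0) = 0`). -/
def bVal {n : ℕ} (w : Fin n → ℤ) (i : ℕ) : ℤ :=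
  if h : 1 ≤ i ∧ i ≤ n then w ⟨i - 1, by omega⟩ else 0

/-- Type `B` descent number: `#{i ∈ {0,…,n−1} : β(i) > β(i+1)}`, with `β(0) = 0`. -/
noncomputable def desB {n : ℕ} (w : Fin n → ℤ) : ℕ :=
  ((Finset.range n).filter fun i => bVal w (i + 1) < bVal w i).card

/-- Type `B` Eulerian number `A_B(n,k)`. -/
noncomputable def EulB (n k : ℕ) : ℕ :=
  Nat.card { w : Fin n → ℤ // IsSignedPerm w ∧ desB w = k }

/-- Type `D` descent number: as in type `B` but with the convention `γ(0) = −γ(2)`. -/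
noncomputable def desD {n : ℕ} (w : Fin n → ℤ) : ℕ :=
  ((Finset.range n).filter fun i =>
    bVal w (i + 1) < (if i = 0 then -(bVal w 2) else bVal w i)).card

/-- `w` has an even number of negative entries. -/
def IsEvenSigned {n : ℕ} (w : Fin n → ℤ) : Prop :=
  Even ((Finset.univ.filter fun i => w i < 0)).card

/-- Type `D` Eulerian number `A_D(n,k)`. -/
noncomputable def EulD (n k : ℕ) : ℕ :=
  Nat.card { w : Fin n → ℤ // IsSignedPerm w ∧ IsEvenSigned w ∧ desD w = k }

/-! ### Set partitions of types B and D -/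

/-- The negative `−C` of a block `C`. -/
def negSet (C : Finset ℤ) : Finset ℤ := C.image fun x => -x

/-- A `Bₙ`-partition: a set partition of `{−n,…,−1,1,…,n}` such that at most one block
satisfies `C = −C` (the zero-block), and `−C` is a block whenever `C` is. -/
structure BPartition (n : ℕ) where
  blocks : Finset (Finset ℤ)
  cover : ∀ x : ℤ, (x ≠ 0 ∧ |x| ≤ (n : ℤ)) ↔ ∃ C ∈ blocks, x ∈ C
  nonempty : ∀ C ∈ blocks, C.Nonempty
  disj : ∀ C ∈ blocks, ∀ C' ∈ blocks, C ≠ C' → Disjoint C C'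
  closed : ∀ C ∈ blocks, negSet C ∈ blocks
  zeroUnique : ∀ C ∈ blocks, ∀ C' ∈ blocks, negSet C = C → negSet C' = C' → C = C'

/-- A `Dₙ`-partition: a `Bₙ`-partition whose zero-block, if present, has at least
two positive elements. -/
def IsDPartition {n : ℕ} (P : BPartition n) : Prop :=
  ∀ C ∈ P.blocks, negSet C = C → 2 ≤ (C.filter fun x => 0 < x).card

/-- `P` has exactly `r` pairs `{C, −C}` of nonzero blocks. -/
def hasPairs {n : ℕ} (P : BPartition n) (r : ℕ) : Prop :=
  (P.blocks.filter fun C => negSet C ≠ C).card = 2 * r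

/-- Stirling number of the second kind of type `B`. -/
noncomputable def SB (n r : ℕ) : ℕ :=
  Nat.card { P : BPartition n // hasPairs P r }

/-- Stirling number of the second kind of type `D`. -/
noncomputable def SD (n r : ℕ) : ℕ :=
  Nat.card { P : BPartition n // IsDPartition P ∧ hasPairs P r }

/-- An ordered `Bₙ`-partition: a `Bₙ`-partition with a linear order on its blocks in
which the zero-block (if present) comes first and `C, −C` are always adjacent. -/
structure OrderedBPartition (n : ℕ) where
  P : BPartition n
  order : List (Finset ℤ)
  nodup : order.Nodup
  same : order.toFinset = P.blocks
  zeroFirst : ∀ C ∈ P.blocks, negSet C = C → order[0]? = some C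
  adjacent : ∀ C ∈ P.blocks, negSet C ≠ C →
    ∃ i : ℕ, (order[i]? = some C ∧ order[i+1]? = some (negSet C)) ∨
             (order[i]? = some (negSet C) ∧ order[i+1]? = some C)

/-! ### Classical Stirling and Eulerian numbers -/

/-- The classical Stirling number of the second kind `S(n,r)`. -/
noncomputable def Stir (n r : ℕ) : ℕ :=
  Nat.card { P : Finpartition (Finset.univ : Finset (Fin n)) // P.parts.card = r }

/-- Number of descents of a permutation of `{1,…,n}`. -/
noncomputable def desA {n : ℕ} (σ : Equiv.Perm (Fin n)) : ℕ :=
  ((Finset.range (n - 1)).filter fun i =>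
    ∃ h : i + 1 < n, σ ⟨i + 1, h⟩ < σ ⟨i, Nat.lt_of_succ_lt h⟩).card

/-- The classical Eulerian number `A(n,k)`: permutations with `k−1` descents
(and `A(n,0) = 0`). -/
noncomputable def EulA (n k : ℕ) : ℕ :=
  if k = 0 then 0 else Nat.card { σ : Equiv.Perm (Fin n) // desA σ = k - 1 }

/-! ### Colored permutations -/

/-- `π` is (the window notation of) a colored permutation in `G_{m,n}`. -/
def IsColoredPerm {m n : ℕ} (π : Fin n → Fin n × ZMod m) : Prop :=
  Function.Bijective fun i => (π i).1

/-- The color order `a ≺ b` on the colored alphabet. -/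
def colorLt {m n : ℕ} (a b : Fin n × ZMod m) : Prop :=
  b.2.val < a.2.val ∨ (a.2 = b.2 ∧ a.1 < b.1)

/-- The descent number `des_G` of a colored permutation. -/
noncomputable def desG {m n : ℕ} (π : Fin n → Fin n × ZMod m) : ℕ :=
  ((Finset.range (n - 1)).filter fun i =>
    ∃ h : i + 1 < n, colorLt (π ⟨i + 1, h⟩) (π ⟨i, Nat.lt_of_succ_lt h⟩)).card
  + (if h : 0 < n then (if (π ⟨0, h⟩).2 ≠ 0 then 1 else 0) else 0)

/-- The Eulerian number `A_m(n,k)` of `G_{m,n}`. -/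
noncomputable def EulG (m n k : ℕ) : ℕ :=
  Nat.card { π : Fin n → Fin n × ZMod m // IsColoredPerm π ∧ desG π = k }

/-- The shift `C^{[t]}` of a block of the colored alphabet. -/
def shiftBlock {m n : ℕ} (t : ZMod m) (C : Finset (Fin n × ZMod m)) :
    Finset (Fin n × ZMod m) :=
  C.image fun p => (p.1, p.2 + t)

/-- A `G_{m,n}`-partition. -/
structure GPartition (m n : ℕ) where
  blocks : Finset (Finset (Fin n × ZMod m))
  cover : ∀ x : Fin n × ZMod m, ∃ C ∈ blocks, x ∈ C
  nonempty : ∀ C ∈ blocks, C.Nonempty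
  disj : ∀ C ∈ blocks, ∀ C' ∈ blocks, C ≠ C' → Disjoint C C'
  closed : ∀ C ∈ blocks, shiftBlock 1 C ∈ blocks
  zeroUnique : ∀ C ∈ blocks, ∀ C' ∈ blocks,
    shiftBlock 1 C = C → shiftBlock 1 C' = C' → C = C'

/-- The number of equivalence classes (orbits under shifting) of nonzero blocks. -/
noncomputable def numClasses {m n : ℕ} (P : GPartition m n) : ℕ :=
  ((P.blocks.filter fun C => shiftBlock 1 C ≠ C).image
    fun C => (Finset.range m).image fun t => shiftBlock (t : ZMod m) C).card

/-- Stirling number of the second kind `S_m(n,r)` for `G_{m,n}`. -/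
noncomputable def SG (m n r : ℕ) : ℕ :=
  Nat.card { P : GPartition m n // numClasses P = r }

/-- An ordered `G_{m,n}`-partition. -/
structure OrderedGPartition (m n : ℕ) where
  P : GPartition m n
  order : List (Finset (Fin n × ZMod m))
  nodup : order.Nodup
  same : order.toFinset = P.blocks
  zeroFirst : ∀ C ∈ P.blocks, shiftBlock 1 C = C → order[0]? = some C
  consec : ∀ C ∈ P.blocks, shiftBlock 1 C ≠ C →
    ∃ i : ℕ, ∃ s : ZMod m, ∀ t : ℕ, t < m →
      order[i + t]? = some (shiftBlock (s + (t : ZMod m)) C)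

/-!
For `x = 2m + 1`, the left side counts the odd maps `g` from `{−n, …, −1, 1, …, n}` to
`{−m, …, m}`. The fibres of `g` form a `Bₙ`-partition, whose zero-block is the fibre of `0`, and
`g` induces an odd injective labelling of its blocks. Conversely, if the partition has `k` pairs
`{C, −C}` of nonzero blocks, such a labelling amounts to `k` distinct absolute values in
`{1, …, m}` together with `k` signs, so there are
`2m (2m − 2) ⋯ (2m − 2k + 2) = (x − 1)(x − 3) ⋯ (x − (2k − 1))` of them. Thus both sides, as
polynomials in `x`, agree at all positive odd integers.
-/

section OddLabelings

variable {B M : Type*} [InvolutiveNeg B]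

/-- A set containing exactly one element of each orbit `{b, -b}` with `-b ≠ b`, picked by comparing
`b` and `-b` in an arbitrary well-order; odd maps are determined by their values on it. -/
def negTransversal (B : Type*) [Neg B] : Set B := {b | WellOrderingRel b (-b)}

theorem neg_notMem_negTransversal {b : B} (hb : b ∈ negTransversal B) :
    -b ∉ negTransversal B := fun hneg => by
  have hneg : WellOrderingRel (-b) b := by
    simpa only [negTransversal, Set.mem_ofPred_eq, neg_neg] using hneg
  exact asymm_of WellOrderingRel hb hneg

theorem mem_negTransversal_or_neg_mem {b : B} (hb : -b ≠ b) :
    b ∈ negTransversal B ∨ -b ∈ negTransversal B := by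
  simpa only [negTransversal, Set.mem_ofPred_eq, neg_neg, hb.symm, false_or] using
    trichotomous_of WellOrderingRel b (-b)

theorem neg_ne_self_of_mem_negTransversal {b : B} (hb : b ∈ negTransversal B) : -b ≠ b :=
  fun h => neg_notMem_negTransversal hb (h.symm ▸ hb)

theorem card_filter_neg_ne_self (B : Type*) [InvolutiveNeg B] [Fintype B] :
    #{b : B | -b ≠ b} = 2 * Nat.card (negTransversal B) := by
  set T : Finset B := {b | b ∈ negTransversal B} with hT
  have hsplit : ({b | -b ≠ b} : Finset B) = T ∪ T.image (-·) := by
    ext b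
    simp only [hT, mem_filter_univ, mem_union, mem_image, neg_eq_iff_eq_neg, exists_eq_right]
    refine ⟨mem_negTransversal_or_neg_mem, ?_⟩
    rintro (hb | hb)
    · exact neg_ne_self_of_mem_negTransversal hb
    · simpa only [neg_neg, ne_comm] using neg_ne_self_of_mem_negTransversal hb
  have hdisj : Disjoint T (T.image (-·)) := by
    simp only [hT, disjoint_left, mem_filter_univ, mem_image, neg_eq_iff_eq_neg, exists_eq_right]
    exact fun b => neg_notMem_negTransversal
  rw [hsplit, card_union_of_disjoint hdisj, card_image_of_injective _ neg_injective, ← two_mul,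
    Nat.card_eq_fintype_card, Fintype.card_subtype]

/-- The odd map on `B` extending `v`; it vanishes at the fixed points of negation. -/
noncomputable def oddExtend {B : Type*} [Neg B] [Zero M] [Neg M] (v : negTransversal B → M)
    (b : B) : M :=
  if hb : b ∈ negTransversal B then v ⟨b, hb⟩
  else if hb : -b ∈ negTransversal B then -v ⟨-b, hb⟩ else 0

theorem oddExtend_coe {B : Type*} [Neg B] [Zero M] [Neg M] (v : negTransversal B → M)
    (t : negTransversal B) : oddExtend v t = v t :=
  dif_pos t.2

theorem oddExtend_odd [SubtractionMonoid M] (v : negTransversal B → M) : (oddExtend v).Odd := by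
  intro b
  by_cases hb : b ∈ negTransversal B
  · simp only [oddExtend, neg_neg, hb, neg_notMem_negTransversal hb, dite_true, dite_false]
  · by_cases hb' : -b ∈ negTransversal B <;> simp [oddExtend, hb, hb']

variable [AddCommGroup M] [LinearOrder M] [IsOrderedAddMonoid M]

theorem eq_of_odd_of_eqOn_negTransversal {h h' : B → M} (hodd : h.Odd) (hodd' : h'.Odd)
    (heq : Set.EqOn h h' (negTransversal B)) : h = h' := by
  funext b
  by_cases hb : -b = b
  · have hzero : ∀ g : B → M, g.Odd → g b = 0 := fun g hg => by
      rw [← self_eq_neg, ← hg, hb]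
    rw [hzero h hodd, hzero h' hodd']
  · rcases mem_negTransversal_or_neg_mem hb with hmem | hmem
    · exact heq hmem
    · simpa only [hodd b, hodd' b, neg_inj] using heq hmem

theorem injective_oddExtend (hfix : {b : B | -b = b}.Subsingleton)
    {v : negTransversal B → M} (hne : ∀ t, v t ≠ 0) (hinj : Function.Injective fun t => |v t|) :
    Function.Injective (oddExtend v) := by
  have hodd := oddExtend_odd v
  have hrep (b : B) (hb : -b ≠ b) :
      ∃ t : negTransversal B, (↑t = b ∨ ↑t = -b) ∧ |v t| = |oddExtend v b| := by
    rcases mem_negTransversal_or_neg_mem hb with hmem | hmem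
    · exact ⟨⟨b, hmem⟩, Or.inl rfl, by rw [← oddExtend_coe v]⟩
    · exact ⟨⟨-b, hmem⟩, Or.inr rfl, by rw [← oddExtend_coe v, hodd, abs_neg]⟩
  have hzero (b : B) : oddExtend v b = 0 ↔ -b = b := by
    refine ⟨fun h0 => ?_, fun hb => by rw [← self_eq_neg, ← hodd, hb]⟩
    by_contra hb
    obtain ⟨t, -, habs⟩ := hrep b hb
    exact hne t (by rwa [h0, abs_zero, abs_eq_zero] at habs)
  intro b c hbc
  by_cases hb : -b = b
  · exact hfix hb ((hzero c).1 (hbc ▸ (hzero b).2 hb))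
  have hc : -c ≠ c := fun hc => hb ((hzero b).1 (hbc.trans ((hzero c).2 hc)))
  obtain ⟨s, hs, habs⟩ := hrep b hb
  obtain ⟨t, ht, habs'⟩ := hrep c hc
  obtain rfl : s = t := hinj (by simp only [habs, habs', hbc])
  have hor : b = c ∨ b = -c := by
    rcases hs with hs | hs <;> rcases ht with ht | ht
    · exact Or.inl (hs.symm.trans ht)
    · exact Or.inr (hs.symm.trans ht)
    · exact Or.inr (neg_eq_iff_eq_neg.1 (hs.symm.trans ht))
    · exact Or.inl (neg_injective (hs.symm.trans ht))
  refine hor.resolve_right fun hneg => hc ?_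
  rwa [hneg, hodd, eq_comm, self_eq_neg, hzero] at hbc

theorem abs_oddExtend_le {v : negTransversal B → M} {a : M} (ha : 0 ≤ a) (hv : ∀ t, |v t| ≤ a)
    (b : B) : |oddExtend v b| ≤ a := by
  unfold oddExtend
  split_ifs
  · exact hv _
  · exact (abs_neg _).trans_le (hv _)
  · exact abs_zero.trans_le ha

/-- The odd maps `B → {−m, …, m}`; on the ground set of size `2n` there are `(2m + 1)ⁿ` of them. -/
@[ext]
structure OddMap (B : Type*) [Neg B] (m : ℕ) where
  toFun : B → ℤ
  odd : toFun.Odd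
  abs_apply_le : ∀ b, |toFun b| ≤ m

theorem card_oddMap (B : Type*) [InvolutiveNeg B] [Finite B] (m : ℕ) :
    Nat.card (OddMap B m) = (2 * m + 1) ^ Nat.card (negTransversal B) := by
  let extend (v : negTransversal B → Set.Icc (-m : ℤ) m) : OddMap B m :=
    ⟨oddExtend fun t => (v t : ℤ), oddExtend_odd _,
      abs_oddExtend_le m.cast_nonneg fun t => abs_le.2 (v t).2⟩
  have hbij : Function.Bijective extend := by
    refine ⟨fun v w hvw => funext fun t => Subtype.ext ?_, fun g => ?_⟩
    · simpa only [extend, oddExtend_coe] using congrFun (congrArg OddMap.toFun hvw) t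
    · refine ⟨fun t => ⟨g.toFun t, abs_le.1 (g.abs_apply_le t)⟩, OddMap.ext ?_⟩
      exact eq_of_odd_of_eqOn_negTransversal (extend _).odd g.odd fun b hb =>
        oddExtend_coe (fun t : negTransversal B => g.toFun t) ⟨b, hb⟩
  rw [← Nat.card_eq_of_bijective extend hbij, Nat.card_fun, Nat.card_eq_fintype_card,
    Fintype.card_ofFinset, Int.card_Icc]
  congr 1
  omega

/-- The odd injective maps `B → {−m, …, m}`, seen as labellings of the blocks `B` of a partition. -/
@[ext]
structure OddLabeling (B : Type*) [Neg B] (m : ℕ) extends OddMap B m where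
  injective : Function.Injective toFun

theorem abs_units_mul_natCast (ε : ℤˣ) (a : ℕ) : |(ε * a : ℤ)| = a := by
  rw [abs_mul, Int.isUnit_iff_abs_eq.1 ε.isUnit, one_mul, Nat.abs_cast]

namespace OddLabeling

variable {m : ℕ}

theorem apply_ne_zero (h : OddLabeling B m) {b : B} (hb : -b ≠ b) : h.toFun b ≠ 0 := fun h0 =>
  hb (h.injective (by rw [h.odd b, h0, neg_zero]))

theorem injective_abs_restrict (h : OddLabeling B m) :
    Function.Injective fun t : negTransversal B => |h.toFun t| := by
  intro s t hst
  rcases abs_eq_abs.1 hst with heq | heq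
  · exact Subtype.ext (h.injective heq)
  · rw [← h.odd] at heq
    exact absurd (h.injective heq ▸ s.2) (neg_notMem_negTransversal t.2)

/-- The labelling of `B` whose value at `t ∈ negTransversal B` has absolute value `e t + 1` and
sign `ε t`. -/
noncomputable def ofAbsSign (hfix : {b : B | -b = b}.Subsingleton)
    (e : negTransversal B ↪ Fin m) (ε : negTransversal B → ℤˣ) : OddLabeling B m :=
  { toFun := oddExtend fun t => ε t * ((e t : ℕ) + 1 : ℕ)
    odd := oddExtend_odd _
    abs_apply_le := abs_oddExtend_le m.cast_nonneg fun t => by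
      rw [abs_units_mul_natCast]
      exact_mod_cast (e t).isLt
    injective := by
      refine injective_oddExtend hfix (fun t => abs_ne_zero.1 ?_) fun s t hst => e.injective ?_
      · rw [abs_units_mul_natCast]
        positivity
      · simpa only [abs_units_mul_natCast, Nat.cast_inj, Nat.add_right_cancel_iff, Fin.val_inj]
          using hst }

theorem ofAbsSign_coe (hfix : {b : B | -b = b}.Subsingleton)
    (e : negTransversal B ↪ Fin m) (ε : negTransversal B → ℤˣ) (t : negTransversal B) :
    (ofAbsSign hfix e ε).toFun t = ε t * ((e t : ℕ) + 1 : ℕ) :=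
  oddExtend_coe (fun t => (ε t * ((e t : ℕ) + 1 : ℕ) : ℤ)) t

theorem injective_ofAbsSign (hfix : {b : B | -b = b}.Subsingleton) :
    Function.Injective fun p : (negTransversal B ↪ Fin m) × (negTransversal B → ℤˣ) =>
      ofAbsSign hfix p.1 p.2 := by
  rintro ⟨e, ε⟩ ⟨e', ε'⟩ heq
  have hval (t) : (ε t * ((e t : ℕ) + 1 : ℕ) : ℤ) = ε' t * ((e' t : ℕ) + 1 : ℕ) := by
    simpa only [ofAbsSign_coe] using congrArg (fun h : OddLabeling B m => h.toFun t) heq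
  have he : e = e' := by
    ext t
    simpa only [abs_units_mul_natCast, Nat.cast_inj, Nat.add_right_cancel_iff] using
      congrArg abs (hval t)
  subst he
  refine Prod.ext rfl (funext fun t => Units.ext ?_)
  exact mul_right_cancel₀ (Nat.cast_ne_zero.2 (Nat.succ_ne_zero _)) (hval t)

theorem surjective_ofAbsSign (hfix : {b : B | -b = b}.Subsingleton) :
    Function.Surjective fun p : (negTransversal B ↪ Fin m) × (negTransversal B → ℤˣ) =>
      ofAbsSign hfix p.1 p.2 := by
  intro h
  have hne (t : negTransversal B) : h.toFun t ≠ 0 :=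
    h.apply_ne_zero (neg_ne_self_of_mem_negTransversal t.2)
  let e (t : negTransversal B) : Fin m :=
    ⟨(h.toFun t).natAbs - 1, by have := hne t; have := abs_le.1 (h.abs_apply_le t); omega⟩
  have he_add_one (t) : (((e t : ℕ) + 1 : ℕ) : ℤ) = |h.toFun t| := by
    have := hne t
    rw [Int.abs_eq_natAbs]
    simp only [e]
    omega
  have he : Function.Injective e := fun s t hst => h.injective_abs_restrict (by
    simp only [← he_add_one, hst])
  refine ⟨(⟨e, he⟩, fun t => if 0 < h.toFun t then 1 else -1), OddLabeling.ext ?_⟩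
  refine eq_of_odd_of_eqOn_negTransversal (ofAbsSign hfix _ _).odd h.odd fun b hb => ?_
  refine (ofAbsSign_coe hfix _ _ ⟨b, hb⟩).trans ?_
  rw [Function.Embedding.coeFn_mk, he_add_one]
  dsimp only
  split_ifs with hpos
  · rw [Units.val_one, one_mul, abs_of_pos hpos]
  · rw [Units.val_neg, Units.val_one, neg_one_mul, abs_of_nonpos (not_lt.1 hpos), neg_neg]

theorem card_eq [Finite B] (hfix : {b : B | -b = b}.Subsingleton) (m : ℕ) :
    Nat.card (OddLabeling B m) =
      2 ^ Nat.card (negTransversal B) * m.descFactorial (Nat.card (negTransversal B)) := by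
  have := Fintype.ofFinite B
  rw [← Nat.card_eq_of_bijective _ ⟨injective_ofAbsSign hfix, surjective_ofAbsSign hfix⟩,
    Nat.card_prod, Nat.card_fun]
  simp [Fintype.card_embedding_eq, mul_comm]

end OddLabeling

end OddLabelings

/-- The set `{−n, …, −1, 1, …, n}` partitioned by the `Bₙ`-partitions. -/
noncomputable def groundSet (n : ℕ) : Finset ℤ := (Icc (-n : ℤ) n).erase 0

theorem mem_groundSet {n : ℕ} {x : ℤ} : x ∈ groundSet n ↔ x ≠ 0 ∧ |x| ≤ n := by
  rw [groundSet, mem_erase, mem_Icc, abs_le]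

theorem card_groundSet (n : ℕ) : #(groundSet n) = 2 * n := by
  rw [groundSet, card_erase_of_mem (by simp), Int.card_Icc]
  omega

theorem neg_mem_groundSet {n : ℕ} {x : ℤ} : -x ∈ groundSet n ↔ x ∈ groundSet n := by
  rw [mem_groundSet, mem_groundSet, neg_ne_zero, abs_neg]

instance (n : ℕ) : InvolutiveNeg (groundSet n) where
  neg x := ⟨-x, neg_mem_groundSet.2 x.2⟩
  neg_neg x := Subtype.ext (neg_neg x.1)

theorem coe_neg_groundSet {n : ℕ} (x : groundSet n) : ((-x : groundSet n) : ℤ) = -x := rfl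

theorem groundSet_neg_ne_self {n : ℕ} (x : groundSet n) : -x ≠ x := fun h =>
  (mem_groundSet.1 x.2).1 (self_eq_neg.1 (congrArg Subtype.val h).symm)

theorem card_negTransversal_groundSet (n : ℕ) : Nat.card (negTransversal (groundSet n)) = n := by
  refine mul_left_cancel₀ two_ne_zero ((card_filter_neg_ne_self (groundSet n)).symm.trans ?_)
  simp only [ne_eq, groundSet_neg_ne_self, not_false_eq_true, filter_true, card_univ,
    Fintype.card_coe, card_groundSet]

theorem mem_negSet {C : Finset ℤ} {x : ℤ} : x ∈ negSet C ↔ -x ∈ C := by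
  simp only [negSet, mem_image, neg_eq_iff_eq_neg, exists_eq_right]

theorem negSet_negSet (C : Finset ℤ) : negSet (negSet C) = C := by
  ext x
  rw [mem_negSet, mem_negSet, neg_neg]

/-- The fibre through `x` of a map `g` on the ground set, as a set of integers so that it can be a
block of a `BPartition`. -/
noncomputable def fibre {n : ℕ} {M : Type*} (g : groundSet n → M) (x : groundSet n) : Finset ℤ :=
  (univ.filter fun y => g y = g x).map (Function.Embedding.subtype _)

theorem mem_fibre {n : ℕ} {M : Type*} {g : groundSet n → M} {x : groundSet n} {y : ℤ}
    (hy : y ∈ groundSet n) : y ∈ fibre g x ↔ g ⟨y, hy⟩ = g x := by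
  rw [fibre, ← mem_filter_univ (p := fun y => g y = g x)]
  exact mem_map' (Function.Embedding.subtype _) (a := ⟨y, hy⟩)

theorem fibre_subset {n : ℕ} {M : Type*} (g : groundSet n → M) (x : groundSet n) :
    fibre g x ⊆ groundSet n := by
  intro y hy
  obtain ⟨z, -, rfl⟩ := mem_map.1 hy
  exact z.2

theorem fibre_congr {n : ℕ} {M M' : Type*} {g : groundSet n → M} {g' : groundSet n → M'}
    {x : groundSet n} (h : ∀ y, g y = g x ↔ g' y = g' x) : fibre g x = fibre g' x := by
  simp only [fibre, h]

theorem fibre_eq_fibre_iff {n : ℕ} {M : Type*} {g : groundSet n → M} {x y : groundSet n} :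
    fibre g x = fibre g y ↔ g x = g y := by
  refine ⟨fun h => (mem_fibre x.2).1 (h ▸ (mem_fibre x.2).2 rfl), fun h => ?_⟩
  simp only [fibre, h]

theorem negSet_fibre {n : ℕ} {M : Type*} [InvolutiveNeg M] {g : groundSet n → M} (hg : g.Odd)
    (x : groundSet n) : negSet (fibre g x) = fibre g (-x) := by
  ext y
  by_cases hy : y ∈ groundSet n
  · rw [mem_negSet, mem_fibre hy, mem_fibre (neg_mem_groundSet.2 hy), hg, ← neg_eq_iff_eq_neg,
      ← hg]
    rfl
  · refine iff_of_false (fun h => hy ?_) fun h => hy (fibre_subset _ _ h)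
    exact neg_mem_groundSet.1 (fibre_subset _ _ (mem_negSet.1 h))

namespace BPartition

variable {n m : ℕ}

instance (P : BPartition n) : InvolutiveNeg P.blocks where
  neg C := ⟨negSet C, P.closed C C.2⟩
  neg_neg C := Subtype.ext (negSet_negSet C)

theorem coe_neg_block (P : BPartition n) (C : P.blocks) :
    ((-C : P.blocks) : Finset ℤ) = negSet C := rfl

theorem subsingleton_neg_eq_self (P : BPartition n) : {C : P.blocks | -C = C}.Subsingleton :=
  fun C hC C' hC' => Subtype.ext <|
    P.zeroUnique C C.2 C' C'.2 (congrArg Subtype.val hC) (congrArg Subtype.val hC')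

theorem mem_groundSet_of_mem (P : BPartition n) {C : Finset ℤ} (hC : C ∈ P.blocks) {x : ℤ}
    (hx : x ∈ C) : x ∈ groundSet n :=
  mem_groundSet.2 ((P.cover x).2 ⟨C, hC, hx⟩)

instance : Finite (BPartition n) := by
  refine Finite.of_injective (fun P => (⟨P.blocks, ?_⟩ : (groundSet n).powerset.powerset)) ?_
  · exact mem_powerset.2 fun C hC => mem_powerset.2 fun x hx => P.mem_groundSet_of_mem hC hx
  · intro P Q hPQ
    cases P
    cases Q
    cases congrArg Subtype.val hPQ
    rfl

/-- The block of `P` containing `x`, as an odd map from the ground set onto the blocks. -/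
noncomputable def blockOf (P : BPartition n) (x : groundSet n) : P.blocks :=
  ⟨_, ((P.cover x).1 (mem_groundSet.1 x.2)).choose_spec.1⟩

theorem mem_blockOf (P : BPartition n) (x : groundSet n) : (x : ℤ) ∈ (P.blockOf x : Finset ℤ) :=
  ((P.cover x).1 (mem_groundSet.1 x.2)).choose_spec.2

theorem blockOf_eq_iff (P : BPartition n) {x : groundSet n} {C : P.blocks} :
    P.blockOf x = C ↔ (x : ℤ) ∈ (C : Finset ℤ) := by
  refine ⟨fun h => h ▸ P.mem_blockOf x, fun hx => ?_⟩
  by_contra hne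
  have hdisj := P.disj _ (P.blockOf x).2 _ C.2 (Subtype.coe_ne_coe.2 hne)
  exact disjoint_left.1 hdisj (P.mem_blockOf x) hx

theorem surjective_blockOf (P : BPartition n) : Function.Surjective P.blockOf := by
  intro C
  obtain ⟨x, hx⟩ := P.nonempty C C.2
  exact ⟨⟨x, P.mem_groundSet_of_mem C.2 hx⟩, P.blockOf_eq_iff.2 hx⟩

theorem blockOf_neg (P : BPartition n) (x : groundSet n) : P.blockOf (-x) = -P.blockOf x := by
  rw [blockOf_eq_iff, coe_neg_block, mem_negSet, coe_neg_groundSet, neg_neg]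
  exact P.mem_blockOf x

theorem fibre_blockOf (P : BPartition n) (x : groundSet n) : fibre P.blockOf x = P.blockOf x := by
  ext y
  refine ⟨fun hy => ?_, fun hy => ?_⟩
  · exact P.blockOf_eq_iff.1 ((mem_fibre (fibre_subset _ x hy)).1 hy)
  · exact (mem_fibre (P.mem_groundSet_of_mem (P.blockOf x).2 hy)).2 (P.blockOf_eq_iff.2 hy)

theorem blocks_eq_image (P : BPartition n) : P.blocks = univ.image (fibre P.blockOf) := by
  ext C
  simp only [mem_image, mem_univ, true_and, fibre_blockOf]
  refine ⟨fun hC => ?_, ?_⟩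
  · obtain ⟨x, hx⟩ := P.surjective_blockOf ⟨C, hC⟩
    exact ⟨x, congrArg Subtype.val hx⟩
  · rintro ⟨x, rfl⟩
    exact (P.blockOf x).2

theorem ext_blockOf {P Q : BPartition n}
    (h : ∀ x y, P.blockOf x = P.blockOf y ↔ Q.blockOf x = Q.blockOf y) : P = Q := by
  have hblocks : P.blocks = Q.blocks := by
    rw [P.blocks_eq_image, Q.blocks_eq_image]
    exact image_congr fun x _ => fibre_congr fun y => h y x
  cases P
  cases Q
  cases hblocks
  rfl

/-- The partition of the ground set into the fibres of an odd map `g`; its zero-block, if any, is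
the fibre of `0`. -/
noncomputable def ofOdd {M : Type*} [AddCommGroup M] [LinearOrder M] [IsOrderedAddMonoid M]
    (g : groundSet n → M) (hg : g.Odd) : BPartition n where
  blocks := univ.image (fibre g)
  cover x := by
    rw [← mem_groundSet, exists_mem_image]
    refine ⟨fun hx => ⟨⟨x, hx⟩, mem_univ _, (mem_fibre hx).2 rfl⟩, ?_⟩
    rintro ⟨y, -, hx⟩
    exact fibre_subset g y hx
  nonempty := forall_mem_image.2 fun x _ => ⟨x, (mem_fibre x.2).2 rfl⟩
  disj := by
    simp only [forall_mem_image]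
    intro x _ y _ hne
    refine disjoint_left.2 fun z hzx hzy => hne (fibre_eq_fibre_iff.2 ?_)
    have hz : z ∈ groundSet n := fibre_subset g x hzx
    exact ((mem_fibre hz).1 hzx).symm.trans ((mem_fibre hz).1 hzy)
  closed := forall_mem_image.2 fun x _ => by
    rw [negSet_fibre hg]
    exact mem_image_of_mem _ (mem_univ _)
  zeroUnique := by
    simp only [forall_mem_image, negSet_fibre hg, fibre_eq_fibre_iff, hg _, neg_eq_self]
    intro x _ y _ hx hy
    rw [hx, hy]

theorem blockOf_ofOdd_eq_iff {M : Type*} [AddCommGroup M] [LinearOrder M] [IsOrderedAddMonoid M]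
    {g : groundSet n → M} (hg : g.Odd) {x y : groundSet n} :
    (ofOdd g hg).blockOf x = (ofOdd g hg).blockOf y ↔ g x = g y := by
  have hy : fibre g y ∈ (ofOdd g hg).blocks := mem_image_of_mem _ (mem_univ y)
  have hblock : (ofOdd g hg).blockOf y = ⟨fibre g y, hy⟩ :=
    (blockOf_eq_iff _).2 ((mem_fibre y.2).2 rfl)
  rw [hblock, blockOf_eq_iff, mem_fibre x.2]

/-- The odd map on the ground set that is constant on the blocks of `P` with values given by `h`. -/
noncomputable def oddMapOfLabeling (P : BPartition n) (h : OddLabeling P.blocks m) :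
    OddMap (groundSet n) m :=
  { toFun := h.toFun ∘ P.blockOf
    odd x := by rw [Function.comp_apply, blockOf_neg, h.odd, Function.comp_apply]
    abs_apply_le x := h.abs_apply_le _ }

theorem oddMapOfLabeling_eq_iff (P : BPartition n) (h : OddLabeling P.blocks m)
    {x y : groundSet n} :
    (P.oddMapOfLabeling h).toFun x = (P.oddMapOfLabeling h).toFun y ↔ P.blockOf x = P.blockOf y :=
  h.injective.eq_iff

theorem injective_oddMapOfLabeling (n m : ℕ) :
    Function.Injective fun p : Σ P : BPartition n, OddLabeling P.blocks m =>
      p.1.oddMapOfLabeling p.2 := by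
  rintro ⟨P, h⟩ ⟨Q, h'⟩ (heq : P.oddMapOfLabeling h = Q.oddMapOfLabeling h')
  obtain rfl : P = Q := ext_blockOf fun x y => by
    rw [← P.oddMapOfLabeling_eq_iff h, heq, Q.oddMapOfLabeling_eq_iff]
  have hcomp : h.toFun ∘ P.blockOf = h'.toFun ∘ P.blockOf := congrArg OddMap.toFun heq
  rw [OddLabeling.ext (P.surjective_blockOf.injective_comp_right hcomp)]

theorem surjective_oddMapOfLabeling (n m : ℕ) :
    Function.Surjective fun p : Σ P : BPartition n, OddLabeling P.blocks m =>
      p.1.oddMapOfLabeling p.2 := by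
  intro g
  let P := ofOdd g.toFun g.odd
  have hker {x y} : P.blockOf x = P.blockOf y ↔ g.toFun x = g.toFun y :=
    blockOf_ofOdd_eq_iff g.odd
  let label (C : P.blocks) : ℤ := g.toFun (Function.surjInv P.surjective_blockOf C)
  have hlabel (x) : label (P.blockOf x) = g.toFun x :=
    hker.1 (Function.surjInv_eq P.surjective_blockOf (P.blockOf x))
  have hodd : label.Odd := P.surjective_blockOf.forall.2 fun x => by
    rw [← blockOf_neg, hlabel, hlabel, g.odd]
  have hinj : Function.Injective label := P.surjective_blockOf.forall₂.2 fun x y hxy =>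
    hker.2 (by rwa [hlabel, hlabel] at hxy)
  exact ⟨⟨P, ⟨⟨label, hodd, fun C => g.abs_apply_le _⟩, hinj⟩⟩, OddMap.ext (funext hlabel)⟩

/-- The number of pairs `{C, −C}` of nonzero blocks of `P`, counted by choosing one block from each
pair. -/
noncomputable def numPairs (P : BPartition n) : ℕ := Nat.card (negTransversal P.blocks)

theorem card_filter_negSet_ne (P : BPartition n) :
    #{C ∈ P.blocks | negSet C ≠ C} = 2 * P.numPairs := by
  rw [numPairs, ← card_filter_neg_ne_self,
    ← card_map (Function.Embedding.subtype (· ∈ P.blocks))]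
  congr 1
  ext C
  simp [← Subtype.coe_ne_coe, coe_neg_block, and_comm]

theorem hasPairs_iff (P : BPartition n) (r : ℕ) : hasPairs P r ↔ P.numPairs = r := by
  rw [hasPairs, card_filter_negSet_ne, Nat.mul_right_inj two_ne_zero]

theorem numPairs_le (P : BPartition n) : P.numPairs ≤ n := by
  have hle : #P.blocks ≤ #(groundSet n) := by
    simpa only [Fintype.card_coe] using Fintype.card_le_of_surjective _ P.surjective_blockOf
  have hpairs := P.card_filter_negSet_ne.symm.trans_le (card_filter_le _ _)
  rw [card_groundSet] at hle
  omega

noncomputable instance : Fintype (BPartition n) := Fintype.ofFinite _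

theorem SB_eq_card_filter (n k : ℕ) : SB n k = #{P : BPartition n | P.numPairs = k} := by
  simp only [SB, hasPairs_iff, Nat.card_eq_fintype_card, Fintype.card_subtype]

theorem sum_card_oddLabeling (n m : ℕ) :
    ∑ P : BPartition n, 2 ^ P.numPairs * m.descFactorial P.numPairs = (2 * m + 1) ^ n := by
  have (P : BPartition n) : Finite (OddLabeling P.blocks m) :=
    Finite.of_surjective _ (OddLabeling.surjective_ofAbsSign P.subsingleton_neg_eq_self)
  calc ∑ P : BPartition n, 2 ^ P.numPairs * m.descFactorial P.numPairs
      = ∑ P : BPartition n, Nat.card (OddLabeling P.blocks m) :=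
        sum_congr rfl fun P _ => (OddLabeling.card_eq P.subsingleton_neg_eq_self m).symm
    _ = Nat.card (Σ P : BPartition n, OddLabeling P.blocks m) := Nat.card_sigma.symm
    _ = Nat.card (OddMap (groundSet n) m) :=
        Nat.card_eq_of_bijective _
          ⟨injective_oddMapOfLabeling n m, surjective_oddMapOfLabeling n m⟩
    _ = (2 * m + 1) ^ n := by rw [card_oddMap, card_negTransversal_groundSet]

end BPartition

theorem prod_Icc_sub_odd_eq_descFactorial {R : Type*} [CommRing R] (m k : ℕ) :
    ∏ j ∈ Icc 1 k, ((2 * m + 1 : R) - (2 * j - 1)) = 2 ^ k * m.descFactorial k := by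
  rw [← descPochhammer_eval_eq_descFactorial]
  induction k with
  | zero => simp
  | succ k ih =>
    rw [prod_Icc_succ_top (by omega), ih, descPochhammer_succ_eval]
    push_cast
    ring

open Polynomial in
theorem X_pow_eq_sum_prod (n : ℕ) :
    (X ^ n : ℤ[X]) = ∑ P : BPartition n, ∏ j ∈ Icc 1 P.numPairs, (X - (2 * (j : ℤ[X]) - 1)) := by
  have hodd : Function.Injective fun m : ℕ => 2 * (m : ℤ) + 1 := fun a b hab => by
    simpa using hab
  refine eq_of_infinite_eval_eq _ _ (Set.infinite_of_injective_forall_mem hodd fun m => ?_)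
  have hcount := congrArg (Nat.cast : ℕ → ℤ) (BPartition.sum_card_oddLabeling n m)
  push_cast at hcount
  simp only [Set.mem_ofPred_eq, eval_pow, eval_X, eval_finsetSum, eval_prod, eval_sub, eval_mul,
    eval_natCast, eval_ofNat, eval_one, prod_Icc_sub_odd_eq_descFactorial, hcount]

theorem falling_factorial_typeB_general {R : Type*} [CommRing R] (n : ℕ) (x : R) :
    x ^ n = ∑ k ∈ Finset.range (n + 1),
      (SB n k : R) * ∏ j ∈ Finset.Icc 1 k, (x - (2 * (j : R) - 1)) := by
  have hsum := congrArg (Polynomial.aeval x) (X_pow_eq_sum_prod n)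
  simp only [map_pow, Polynomial.aeval_X, map_sum, map_prod, map_sub, map_mul, map_natCast,
    map_one, map_ofNat] at hsum
  rw [hsum, ← sum_fiberwise_of_maps_to (s := univ) (t := range (n + 1)) (g := BPartition.numPairs)
    fun P _ => mem_range_succ_iff.2 P.numPairs_le]
  refine sum_congr rfl fun k _ => ?_
  rw [BPartition.SB_eq_card_filter, ← nsmul_eq_mul, ← sum_const]
  refine sum_congr rfl fun P hP => ?_
  rw [(mem_filter.1 hP).2]

/-- `x^n = Σ_{k=0}^{n} S_B(n,k) · (x−1)(x−3)⋯(x−(2k−1))`. -/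
theorem falling_factorial_typeB (n : ℕ) (x : ℝ) :
    x ^ n = ∑ k ∈ Finset.range (n + 1),
      (SB n k : ℝ) * ∏ j ∈ Finset.Icc 1 k, (x - (2 * (j : ℝ) - 1)) :=
  falling_factorial_typeB_general n x
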